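/- arXiv:1905.07145 — 2 statements merged into one kernel-verified Lean document; each statement's English description precedes it below -/
import Mathlib

section
/- Let $T\in\mathbb{N}$, let $\beta>0$ be a real switching cost, and let $g_t:\{0,1\}\to[0,\infty)$ for $t=1,\dots,T$. For a schedule $s=(s_1,\dots,s_T)\in\{0,1\}^T$, with $s_0:=0$, put $\mathrm{Cost}(s):=\sum_{t=1}^T\big(g_t(s_t)+\beta\,(s_t-s_{t-1})^+\big)$, where $(x)^+:=\max\{x,0\}$, and let $\mathrm{Opt}:=\min_{s\in\{0,1\}^T}\mathrm{Cost}(s)$ (problem SP). Let $\Delta(0):=-\beta$ and $\Delta(t):=\min\{0,\max\{-\beta,\ \Delta(t-1)+g_t(0)-g_t(1)\}\}$ for $t=1,\dots,T$. The offline algorithm $\mathrm{OFA}_s$ outputs the schedule $z=(z_1,\dots,z_T)$ defined backwards by $z_{T+1}:=0$ and, for $t=T,T-1,\dots,1$: $z_t:=0$ if $\Delta(t)=-\beta$; $z_t:=1$ if $\Delta(t)=0$; and $z_t:=z_{t+1}$ otherwise. Then $z$ is optimal for SP: $\mathrm{Cost}(z)\le\mathrm{Cost}(s)$ for every schedule $s\in\{0,1\}^T$;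 that is, $\mathrm{Cost}(z)=\mathrm{Opt}$. -/
/-- A schedule `(s_1, …, s_T) ∈ {0,1}^T`; the entry with index `i : Fin T` is the state in time
slot `i + 1`. -/
abbrev Schedule (T : ℕ) : Type := Fin T → Fin 2

/-- The state `s_t` of a schedule at time `t`: the given entry for `1 ≤ t ≤ T`, and the boundary
value `0` at all other times (in particular `s_0 = 0`). -/
def Schedule.state {T : ℕ} (s : Schedule T) (t : ℕ) : Fin 2 :=
  if h : 1 ≤ t ∧ t ≤ T then s ⟨t - 1, by omega⟩ else 0

/-- `Cost(s) = ∑_{t=1}^T (g_t(s_t) + β (s_t - s_{t-1})^+)`. -/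
noncomputable def scheduleCost (T : ℕ) (β : ℝ) (g : ℕ → Fin 2 → ℝ) (s : Schedule T) : ℝ :=
  ∑ t ∈ Finset.Icc 1 T,
    (g t (s.state t) + β * max (((s.state t).val : ℝ) - ((s.state (t - 1)).val : ℝ)) 0)

/-- The minimum of the cost over the finite nonempty set of all schedules. -/
noncomputable def optCost (T : ℕ) (β : ℝ) (g : ℕ → Fin 2 → ℝ) : ℝ :=
  Finset.univ.inf' Finset.univ_nonempty (scheduleCost T β g)

/-- The one-slot cost difference `δ(t) = g_t(0) - g_t(1)`. -/
def costDiff (g : ℕ → Fin 2 → ℝ) (t : ℕ) : ℝ := g t 0 - g t 1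

/-- The cumulative cost difference: `Δ(0) = -β` and
`Δ(t) = min {0, max {-β, Δ(t-1) + δ(t)}}` for `t ≥ 1`. -/
noncomputable def cumDiff (β : ℝ) (g : ℕ → Fin 2 → ℝ) : ℕ → ℝ
  | 0 => -β
  | t + 1 => min 0 (max (-β) (cumDiff β g t + costDiff g (t + 1)))

/-- The backward recursion of the offline algorithm: the value is `0` after time `T`; at a time
`t ≤ T` it is `0` if `Δ(t) = -β`, otherwise `1` if `Δ(t) = 0`, and otherwise the value at
time `t + 1`. -/
noncomputable def ofaState (T : ℕ) (β : ℝ) (g : ℕ → Fin 2 → ℝ) (t : ℕ) : Fin 2 :=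
  if T < t then 0
  else if cumDiff β g t = -β then 0
  else if cumDiff β g t = 0 then 1
  else ofaState T β g (t + 1)
termination_by T + 1 - t

/-- The schedule `z = (z_1, …, z_T)` output by the offline algorithm. -/
noncomputable def ofaSchedule (T : ℕ) (β : ℝ) (g : ℕ → Fin 2 → ℝ) : Schedule T :=
  fun i => ofaState T β g (i.val + 1)

/-- The minimal cost of reaching state `0` after the first `t` time slots, powering down for free:
if `Δ(t) + δ(t+1) > 0`, being in state `1` in slot `t + 1` saves that amount. -/
noncomputable def offCost (β : ℝ) (g : ℕ → Fin 2 → ℝ) : ℕ → ℝ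
  | 0 => 0
  | t + 1 => offCost β g t + g (t + 1) 0 - max 0 (cumDiff β g t + costDiff g (t + 1))

/-- The minimal cost of the first `t` time slots including the switch into state `x` afterwards. -/
noncomputable def reachCost (β : ℝ) (g : ℕ → Fin 2 → ℝ) (t : ℕ) (x : Fin 2) : ℝ :=
  offCost β g t - (x.val : ℝ) * cumDiff β g t

/-- The cost of a state sequence `u` over the first `t` time slots. -/
noncomputable def partialCost (β : ℝ) (g : ℕ → Fin 2 → ℝ) (u : ℕ → Fin 2) (t : ℕ) : ℝ :=
  ∑ k ∈ Finset.Icc 1 t,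
    (g k (u k) + β * max (((u k).val : ℝ) - ((u (k - 1)).val : ℝ)) 0)

theorem partialCost_zero (β : ℝ) (g : ℕ → Fin 2 → ℝ) (u : ℕ → Fin 2) :
    partialCost β g u 0 = 0 := by
  simp [partialCost]

theorem partialCost_succ (β : ℝ) (g : ℕ → Fin 2 → ℝ) (u : ℕ → Fin 2) (t : ℕ) :
    partialCost β g u (t + 1) = partialCost β g u t +
      (g (t + 1) (u (t + 1)) + β * max (((u (t + 1)).val : ℝ) - ((u t).val : ℝ)) 0) := by
  simp [partialCost, Finset.sum_Icc_succ_top]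

theorem cumDiff_nonpos {β : ℝ} (hβ : 0 ≤ β) (g : ℕ → Fin 2 → ℝ) (t : ℕ) :
    cumDiff β g t ≤ 0 := by
  cases t with
  | zero => simpa [cumDiff] using hβ
  | succ t => exact min_le_left _ _

theorem neg_le_cumDiff {β : ℝ} (hβ : 0 ≤ β) (g : ℕ → Fin 2 → ℝ) (t : ℕ) :
    -β ≤ cumDiff β g t := by
  cases t with
  | zero => exact le_rfl
  | succ t => exact le_min (by linarith) (le_max_left _ _)

theorem reachCost_zero (β : ℝ) (g : ℕ → Fin 2 → ℝ) (x : Fin 2) :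
    reachCost β g 0 x = β * max ((x.val : ℝ) - ((0 : Fin 2).val : ℝ)) 0 := by
  fin_cases x <;> simp [reachCost, offCost, cumDiff]

theorem reachCost_succ_le {β : ℝ} (hβ : 0 ≤ β) (g : ℕ → Fin 2 → ℝ) (t : ℕ) (x y : Fin 2) :
    reachCost β g (t + 1) x ≤
      reachCost β g t y + g (t + 1) y + β * max ((x.val : ℝ) - (y.val : ℝ)) 0 := by
  have h₀ := cumDiff_nonpos hβ g t
  have h₁ := neg_le_cumDiff hβ g t
  fin_cases x <;> fin_cases y <;> simp [reachCost, offCost, cumDiff, costDiff] <;> grind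

theorem reachCost_le_partialCost {β : ℝ} (hβ : 0 ≤ β) (g : ℕ → Fin 2 → ℝ) (u : ℕ → Fin 2)
    (hu : u 0 = 0) (t : ℕ) (x : Fin 2) :
    reachCost β g t x ≤ partialCost β g u t + β * max ((x.val : ℝ) - ((u t).val : ℝ)) 0 := by
  induction t generalizing x with
  | zero => rw [reachCost_zero, partialCost_zero, hu, zero_add]
  | succ t ih =>
    have := reachCost_succ_le hβ g t x (u (t + 1))
    have := ih (u (t + 1))
    rw [partialCost_succ]
    linarith

theorem ofaState_zero (T : ℕ) (β : ℝ) (g : ℕ → Fin 2 → ℝ) : ofaState T β g 0 = 0 := by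
  rw [ofaState]
  simp [cumDiff]

theorem ofaState_of_lt {T t : ℕ} (h : T < t) (β : ℝ) (g : ℕ → Fin 2 → ℝ) :
    ofaState T β g t = 0 := by
  rw [ofaState, if_pos h]

theorem ofaSchedule_state (T : ℕ) (β : ℝ) (g : ℕ → Fin 2 → ℝ) (t : ℕ) :
    (ofaSchedule T β g).state t = ofaState T β g t := by
  unfold Schedule.state
  split_ifs with h
  · simp [ofaSchedule, Nat.sub_add_cancel h.1]
  · rcases Nat.eq_zero_or_pos t with rfl | ht
    · exact (ofaState_zero T β g).symm
    · exact (ofaState_of_lt (by omega) β g).symm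

theorem reachCost_succ_ofaState {β : ℝ} (hβ : 0 < β) (g : ℕ → Fin 2 → ℝ) {T t : ℕ}
    (ht : t + 1 ≤ T) :
    reachCost β g (t + 1) (ofaState T β g (t + 2)) =
      reachCost β g t (ofaState T β g (t + 1)) + g (t + 1) (ofaState T β g (t + 1)) +
        β * max (((ofaState T β g (t + 2)).val : ℝ) - ((ofaState T β g (t + 1)).val : ℝ)) 0 := by
  have hz : ofaState T β g (t + 1) = if cumDiff β g (t + 1) = -β then 0
      else if cumDiff β g (t + 1) = 0 then 1 else ofaState T β g (t + 2) := by
    rw [ofaState, if_neg (by omega)]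
  generalize ofaState T β g (t + 2) = x at hz ⊢
  rw [hz]
  have h₀ := cumDiff_nonpos hβ.le g t
  have h₁ := neg_le_cumDiff hβ.le g t
  have hΔ : cumDiff β g (t + 1) = min 0 (max (-β) (cumDiff β g t + costDiff g (t + 1))) := rfl
  have hδ : costDiff g (t + 1) = g (t + 1) 0 - g (t + 1) 1 := rfl
  split_ifs with h h' <;> fin_cases x <;> simp [reachCost, offCost] <;> grind

theorem partialCost_ofaState {β : ℝ} (hβ : 0 < β) (g : ℕ → Fin 2 → ℝ) {T t : ℕ} (ht : t ≤ T) :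
    partialCost β g (ofaState T β g) t +
        β * max (((ofaState T β g (t + 1)).val : ℝ) - ((ofaState T β g t).val : ℝ)) 0 =
      reachCost β g t (ofaState T β g (t + 1)) := by
  induction t with
  | zero => rw [reachCost_zero, partialCost_zero, ofaState_zero, zero_add]
  | succ t ih =>
    have := ih (by omega)
    rw [reachCost_succ_ofaState hβ g ht, partialCost_succ]
    linarith

theorem mul_max_zero_sub_val (β : ℝ) (x : Fin 2) :
    β * max (((0 : Fin 2).val : ℝ) - (x.val : ℝ)) 0 = 0 := by
  simp

theorem scheduleCost_ofaSchedule {β : ℝ} (hβ : 0 < β) (g : ℕ → Fin 2 → ℝ) (T : ℕ) :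
    scheduleCost T β g (ofaSchedule T β g) = reachCost β g T 0 := by
  have h := partialCost_ofaState hβ g (le_refl T)
  rw [ofaState_of_lt (Nat.lt_succ_self T), mul_max_zero_sub_val, add_zero] at h
  rw [← h]
  simp only [scheduleCost, partialCost, ofaSchedule_state]

theorem reachCost_le_scheduleCost {β : ℝ} (hβ : 0 ≤ β) (g : ℕ → Fin 2 → ℝ) {T : ℕ}
    (s : Schedule T) : reachCost β g T 0 ≤ scheduleCost T β g s := by
  have h := reachCost_le_partialCost hβ g s.state (by simp [Schedule.state]) T 0
  rwa [mul_max_zero_sub_val, add_zero] at h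

theorem stmt1 (T : ℕ) (β : ℝ) (hβ : 0 < β) (g : ℕ → Fin 2 → ℝ)
    (hg : ∀ t ∈ Finset.Icc 1 T, ∀ x : Fin 2, 0 ≤ g t x) :
    (∀ s : Schedule T,
      scheduleCost T β g (ofaSchedule T β g) ≤ scheduleCost T β g s) ∧
    scheduleCost T β g (ofaSchedule T β g) = optCost T β g := by
  have hle : ∀ s : Schedule T,
      scheduleCost T β g (ofaSchedule T β g) ≤ scheduleCost T β g s := fun s =>
    (scheduleCost_ofaSchedule hβ g T).trans_le (reachCost_le_scheduleCost hβ.le g s)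
  exact ⟨hle, le_antisymm (Finset.le_inf' _ _ fun s _ => hle s)
    (Finset.inf'_le _ (Finset.mem_univ _))⟩
end

section
/- Fix a switching cost $\beta>0$. For a horizon $T\in\mathbb N$ and cost functions $g_1,\dots,g_T:\{0,1\}\to[0,\infty)$, problem SP is to choose a schedule $s=(s_1,\dots,s_T)\in\{0,1\}^T$ minimizing $\mathrm{Cost}(s)=\sum_{t=1}^T\big(g_t(s_t)+\beta\,(s_t-s_{t-1})^+\big)$, where $s_0:=0$ and $(x)^+:=\max\{x,0\}$; let $\mathrm{Opt}$ be the minimum. Put $\Delta(0):=-\beta$ and $\Delta(t):=\min\{0,\max\{-\beta,\Delta(t-1)+g_t(0)-g_t(1)\}\}$ for $t=1,\dots,T$. The algorithm $\mathrm{gCHASE}_s$ outputs the schedule $x$ given by $x_0:=0$ and, for $t\ge 1$, $x_t:=0$ if $\Delta(t)=-\beta$, $x_t:=1$ if $\Delta(t)=0$, and $x_t:=x_{t-1}$ otherwise. Then $\mathrm{gCHASE}_s$ is an online algorithm ($x_t$ depends only on $g_1,\dots,g_t$), and its competitive ratio for problem SP is $3$. More precisely, $\mathrm{Cost}(x)\le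 3\cdot\mathrm{Opt}$ for all $T$ and all nonnegative $g_1,\dots,g_T$, and $3$ is the smallest real $c$ for which there is a constant $\gamma$, independent of $T$ and of $g_1,\dots,g_T$, such that $\mathrm{Cost}(x)\le c\cdot\mathrm{Opt}+\gamma$ for all $T$ and all nonnegative $g_1,\dots,g_T$. -/
namespace EnergyPlan

/-- The one-slot cost functions `g_1, …, g_T : {0,1} → ℝ` are nonnegative. (Inputs are sequences
`g : ℕ → Fin 2 → ℝ`; only the entries with index `1, …, T` matter for horizon `T`.) -/
def NonnegOn (T : ℕ) (g : ℕ → Fin 2 → ℝ) : Prop :=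
  ∀ t ∈ Finset.Icc 1 T, ∀ i, 0 ≤ g t i

/-- The cost `∑_{t=1}^T (g_t(s_t) + β (s_t - s_{t-1})⁺)` of a sequence of states
`s_0, s_1, …, s_T ∈ {0,1}`. -/
noncomputable def cost (T : ℕ) (β : ℝ) (g : ℕ → Fin 2 → ℝ) (s : ℕ → Fin 2) : ℝ :=
  ∑ t ∈ Finset.Icc 1 T,
    (g t (s t) + β * max (((s t : ℕ) : ℝ) - ((s (t - 1) : ℕ) : ℝ)) 0)

/-- The costs of all schedules that start from the initial state `s_0 = 0`. -/
def costSet (T : ℕ) (β : ℝ) (g : ℕ → Fin 2 → ℝ) : Set ℝ :=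
  {c | ∃ s : ℕ → Fin 2, s 0 = 0 ∧ c = cost T β g s}

/-- The offline optimal cost; it is an attained minimum, see `opt_isLeast`. -/
noncomputable def opt (T : ℕ) (β : ℝ) (g : ℕ → Fin 2 → ℝ) : ℝ :=
  sInf (costSet T β g)

theorem opt_isLeast (T : ℕ) (β : ℝ) (g : ℕ → Fin 2 → ℝ) :
    IsLeast (costSet T β g) (opt T β g) := by
  have hfin : (costSet T β g).Finite := by
    refine (Set.finite_range (fun f : Fin (T + 1) → Fin 2 =>
      cost T β g (fun t => if h : t < T + 1 then f ⟨t, h⟩ else 0))).subset ?_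
    rintro c ⟨s, -, rfl⟩
    refine ⟨fun i => s i, ?_⟩
    refine Finset.sum_congr rfl fun t ht => ?_
    rw [Finset.mem_Icc] at ht
    have h1 : t < T + 1 := by omega
    have h2 : t - 1 < T + 1 := by omega
    simp only [h1, h2, dite_true]
  have hne : (costSet T β g).Nonempty := ⟨_, fun _ => 0, rfl, rfl⟩
  exact ⟨hne.csInf_mem hfin, fun _ hc => csInf_le hfin.bddBelow hc⟩

/-- The one-slot cost difference `δ(t) = g_t(0) - g_t(1)`. -/
def diff (g : ℕ → Fin 2 → ℝ) (t : ℕ) : ℝ := g t 0 - g t 1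

/-- The cumulative cost difference `Δ(t)`: `Δ(0) = -β` and
`Δ(t) = min{0, max{-β, Δ(t-1) + δ(t)}}`. -/
noncomputable def cumDiff (β : ℝ) (g : ℕ → Fin 2 → ℝ) : ℕ → ℝ
  | 0 => -β
  | t + 1 => min 0 (max (-β) (cumDiff β g t + diff g (t + 1)))

open scoped Classical in
/-- The schedule produced by `gCHASE_s`. -/
noncomputable def gChase (β : ℝ) (g : ℕ → Fin 2 → ℝ) : ℕ → Fin 2
  | 0 => 0
  | t + 1 =>
      if cumDiff β g (t + 1) = -β then 0
      else if cumDiff β g (t + 1) = 0 then 1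
      else gChase β g t

/-- A deterministic algorithm, mapping inputs to sequences of states, is online if it starts in
state `0` and its state at time `t` depends only on the inputs `g_1, …, g_t`. -/
def IsOnline (A : (ℕ → Fin 2 → ℝ) → ℕ → Fin 2) : Prop :=
  (∀ g, A g 0 = 0) ∧
    ∀ (t : ℕ) (g g' : ℕ → Fin 2 → ℝ), (∀ τ ∈ Finset.Icc 1 t, g τ = g' τ) → A g t = A g' t

/-- `A` is `c`-competitive (switching cost `β`): its cost is at most `c` times the optimal cost
plus an additive constant that does not depend on the input (nor on its length). -/
def IsCompetitive (β : ℝ) (A : (ℕ → Fin 2 → ℝ) → ℕ → Fin 2) (c : ℝ) : Prop :=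
  ∃ γ : ℝ, ∀ (T : ℕ) (g : ℕ → Fin 2 → ℝ), NonnegOn T g →
    cost T β g (A g) ≤ c * opt T β g + γ

/-- `c` is the competitive ratio of `A`: the smallest `c` for which `A` is `c`-competitive. -/
def IsCompetitiveRatio (β : ℝ) (A : (ℕ → Fin 2 → ℝ) → ℕ → Fin 2) (c : ℝ) : Prop :=
  IsLeast {c' : ℝ | IsCompetitive β A c'} c

end EnergyPlan

namespace EnergyPlan

theorem cost_zero (β : ℝ) (g : ℕ → Fin 2 → ℝ) (s : ℕ → Fin 2) : cost 0 β g s = 0 := by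
  simp [cost]

theorem cost_succ (T : ℕ) (β : ℝ) (g : ℕ → Fin 2 → ℝ) (s : ℕ → Fin 2) :
    cost (T + 1) β g s = cost T β g s +
      (g (T + 1) (s (T + 1)) + β * max (((s (T + 1) : ℕ) : ℝ) - ((s T : ℕ) : ℝ)) 0) := by
  simp [cost, Finset.sum_Icc_succ_top]

theorem NonnegOn.of_succ {T : ℕ} {g : ℕ → Fin 2 → ℝ} (h : NonnegOn (T + 1) g) : NonnegOn T g :=
  fun t ht i => h t (Finset.Icc_subset_Icc_right T.le_succ ht) i

theorem NonnegOn.last {T : ℕ} {g : ℕ → Fin 2 → ℝ} (h : NonnegOn (T + 1) g) (i : Fin 2) :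
    0 ≤ g (T + 1) i :=
  h (T + 1) (by simp) i

theorem cumDiff_nonpos {β : ℝ} (hβ : 0 ≤ β) (g : ℕ → Fin 2 → ℝ) (t : ℕ) : cumDiff β g t ≤ 0 := by
  cases t with
  | zero => simpa [cumDiff] using hβ
  | succ t => exact min_le_left _ _

theorem neg_le_cumDiff {β : ℝ} (hβ : 0 ≤ β) (g : ℕ → Fin 2 → ℝ) (t : ℕ) : -β ≤ cumDiff β g t := by
  cases t with
  | zero => simp [cumDiff]
  | succ t => exact le_min (by linarith) (le_max_left _ _)

/-- The work function at state `0`, that is, the least cost of serving the first `t` slots. At state `1`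
the work function is `workFun β g t - cumDiff β g t`. -/
noncomputable def workFun (β : ℝ) (g : ℕ → Fin 2 → ℝ) : ℕ → ℝ
  | 0 => 0
  | t + 1 => workFun β g t + min (g (t + 1) 0) (g (t + 1) 1 - cumDiff β g t)

theorem workFun_add_le_cost {β : ℝ} (hβ : 0 ≤ β) (g : ℕ → Fin 2 → ℝ) (s : ℕ → Fin 2)
    (hs : s 0 = 0) (t : ℕ) :
    workFun β g t - cumDiff β g t * ((s t : ℕ) : ℝ) ≤ cost t β g s := by
  induction t with
  | zero => simp [cost_zero, workFun, hs]
  | succ t ih =>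
    have h0 := cumDiff_nonpos hβ g t
    have h1 := neg_le_cumDiff hβ g t
    rw [cost_succ, workFun, cumDiff, diff]
    rcases Fin.exists_fin_two.mp ⟨s t, rfl⟩ with h | h <;>
    rcases Fin.exists_fin_two.mp ⟨s (t + 1), rfl⟩ with h' | h' <;>
    · rw [h] at ih
      rw [h, h']
      norm_num at ih ⊢
      grind

theorem workFun_le_opt {β : ℝ} (hβ : 0 ≤ β) (g : ℕ → Fin 2 → ℝ) (T : ℕ) :
    workFun β g T ≤ opt T β g := by
  obtain ⟨s, hs, h⟩ := (opt_isLeast T β g).1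
  rw [h]
  have h1 := workFun_add_le_cost hβ g s hs T
  have h2 : cumDiff β g T * ((s T : ℕ) : ℝ) ≤ 0 :=
    mul_nonpos_of_nonpos_of_nonneg (cumDiff_nonpos hβ g T) (Nat.cast_nonneg _)
  linarith

/-- The potential argument: the cost of `gCHASE_s`, corrected by a potential depending on its
state and on the cumulative difference, is at most three times the work function. -/
theorem cost_gChase_add_potential_le {β : ℝ} (hβ : 0 < β) (g : ℕ → Fin 2 → ℝ) (t : ℕ)
    (hg : NonnegOn t g) :
    cost t β g (gChase β g) + (2 - ((gChase β g t : ℕ) : ℝ)) * (cumDiff β g t + β) ≤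
      3 * workFun β g t := by
  induction t with
  | zero => simp [cost_zero, workFun, cumDiff]
  | succ t ih =>
    have ih := ih hg.of_succ
    have h0 := cumDiff_nonpos hβ.le g t
    have h1 := neg_le_cumDiff hβ.le g t
    have hg0 := hg.last 0
    have hg1 := hg.last 1
    have hd : cumDiff β g (t + 1) = min 0 (max (-β) (cumDiff β g t + (g (t + 1) 0 - g (t + 1) 1))) :=
      rfl
    have hx : gChase β g (t + 1) = if cumDiff β g (t + 1) = -β then 0
        else if cumDiff β g (t + 1) = 0 then 1 else gChase β g t := by
      rw [gChase]
    rw [cost_succ, workFun]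
    generalize cumDiff β g (t + 1) = d' at *
    generalize cumDiff β g t = d at *
    rcases Fin.exists_fin_two.mp ⟨gChase β g t, rfl⟩ with h | h <;>
    · rw [h] at ih hx ⊢
      split_ifs at hx with ha hb <;>
      · rw [hx]
        norm_num at ih ⊢
        grind

theorem cost_gChase_le {β : ℝ} (hβ : 0 < β) (T : ℕ) (g : ℕ → Fin 2 → ℝ) (hg : NonnegOn T g) :
    cost T β g (gChase β g) ≤ 3 * opt T β g := by
  have h1 := cost_gChase_add_potential_le hβ g T hg
  have h2 := workFun_le_opt hβ.le g T
  have h3 : ((gChase β g T : ℕ) : ℝ) ≤ 2 := by exact_mod_cast (gChase β g T).isLt.le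
  have h4 : 0 ≤ (2 - ((gChase β g T : ℕ) : ℝ)) * (cumDiff β g T + β) :=
    mul_nonneg (by linarith) (by linarith [neg_le_cumDiff hβ.le g T])
  linarith

theorem cumDiff_congr (β : ℝ) {t : ℕ} {g g' : ℕ → Fin 2 → ℝ}
    (h : ∀ τ ∈ Finset.Icc 1 t, g τ = g' τ) : cumDiff β g t = cumDiff β g' t := by
  induction t with
  | zero => rfl
  | succ t ih =>
    rw [cumDiff, cumDiff, diff, diff, h (t + 1) (by simp),
      ih fun τ hτ => h τ (Finset.Icc_subset_Icc_right t.le_succ hτ)]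

theorem isOnline_gChase (β : ℝ) : IsOnline (gChase β) := by
  refine ⟨fun _ => rfl, fun t g g' h => ?_⟩
  induction t with
  | zero => rfl
  | succ t ih =>
    rw [gChase, gChase, cumDiff_congr β h,
      ih fun τ hτ => h τ (Finset.Icc_subset_Icc_right t.le_succ hτ)]

/-- The input of period four that forces `gCHASE_s` to pay nearly `3 * β` per period, while
staying in state `0` costs `β` per period. -/
def cyclicInput (β ε : ℝ) (t : ℕ) : Fin 2 → ℝ :=
  if t % 4 = 1 then ![β - ε, 0]
  else if t % 4 = 2 then ![ε, 0]
  else if t % 4 = 3 then ![0, β - ε]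
  else ![0, ε]

theorem cyclicInput_one (β ε : ℝ) (n : ℕ) : cyclicInput β ε (4 * n + 1) = ![β - ε, 0] := by
  have : (4 * n + 1) % 4 = 1 := by omega
  simp [cyclicInput, this]

theorem cyclicInput_two (β ε : ℝ) (n : ℕ) : cyclicInput β ε (4 * n + 2) = ![ε, 0] := by
  have : (4 * n + 2) % 4 = 2 := by omega
  simp [cyclicInput, this]

theorem cyclicInput_three (β ε : ℝ) (n : ℕ) : cyclicInput β ε (4 * n + 3) = ![0, β - ε] := by
  have : (4 * n + 3) % 4 = 3 := by omega
  simp [cyclicInput, this]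

theorem cyclicInput_four (β ε : ℝ) (n : ℕ) : cyclicInput β ε (4 * n + 4) = ![0, ε] := by
  have : (4 * n + 4) % 4 = 0 := by omega
  simp [cyclicInput, this]

theorem cyclicInput_nonneg {β ε : ℝ} (hε : 0 ≤ ε) (hεβ : ε ≤ β) (t : ℕ) (i : Fin 2) :
    0 ≤ cyclicInput β ε t i := by
  unfold cyclicInput
  split_ifs <;> fin_cases i <;> simp [hε, hεβ]

theorem cost_cyclicInput_zero (β ε : ℝ) (n : ℕ) :
    cost (4 * n) β (cyclicInput β ε) (fun _ => 0) = n * β := by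
  induction n with
  | zero => simp [cost_zero]
  | succ n ih =>
    rw [show 4 * (n + 1) = 4 * n + 3 + 1 by ring, cost_succ, cost_succ, cost_succ, cost_succ, ih,
      cyclicInput_one, cyclicInput_two, cyclicInput_three, cyclicInput_four]
    norm_num
    ring

theorem gChase_cyclicInput {β ε : ℝ} (hε : 0 < ε) (hεβ : ε < β) (n : ℕ) :
    cumDiff β (cyclicInput β ε) (4 * n) = -β ∧ gChase β (cyclicInput β ε) (4 * n) = 0 ∧
      cost (4 * n) β (cyclicInput β ε) (gChase β (cyclicInput β ε)) = n * (3 * β - 2 * ε) := by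
  induction n with
  | zero => simp [cost_zero, cumDiff, gChase]
  | succ n ih =>
    obtain ⟨hd, hx, hc⟩ := ih
    have d1 : cumDiff β (cyclicInput β ε) (4 * n + 1) = -ε := by
      rw [cumDiff, hd, diff, cyclicInput_one]
      norm_num
      grind
    have d2 : cumDiff β (cyclicInput β ε) (4 * n + 2) = 0 := by
      rw [cumDiff, d1, diff, cyclicInput_two]
      norm_num
    have d3 : cumDiff β (cyclicInput β ε) (4 * n + 3) = ε - β := by
      rw [cumDiff, d2, diff, cyclicInput_three]
      norm_num
      grind
    have d4 : cumDiff β (cyclicInput β ε) (4 * n + 4) = -β := by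
      rw [cumDiff, d3, diff, cyclicInput_four]
      norm_num
      grind
    have x1 : gChase β (cyclicInput β ε) (4 * n + 1) = 0 := by
      rw [gChase, d1, hx, if_neg (by grind), if_neg (by grind)]
    have x2 : gChase β (cyclicInput β ε) (4 * n + 2) = 1 := by
      rw [gChase, d2, if_neg (by grind), if_pos rfl]
    have x3 : gChase β (cyclicInput β ε) (4 * n + 3) = 1 := by
      rw [gChase, d3, x2, if_neg (by grind), if_neg (by grind)]
    have x4 : gChase β (cyclicInput β ε) (4 * n + 4) = 0 := by
      rw [gChase, d4, if_pos rfl]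
    refine ⟨d4, x4, ?_⟩
    rw [show 4 * (n + 1) = 4 * n + 3 + 1 by ring, cost_succ, cost_succ, cost_succ, cost_succ, hc,
      x4, x3, x2, x1, hx,
      cyclicInput_one, cyclicInput_two, cyclicInput_three, cyclicInput_four]
    norm_num
    ring

theorem opt_nonneg {T : ℕ} {β : ℝ} (hβ : 0 ≤ β) {g : ℕ → Fin 2 → ℝ} (hg : NonnegOn T g) :
    0 ≤ opt T β g := by
  obtain ⟨s, -, h⟩ := (opt_isLeast T β g).1
  rw [h]
  exact Finset.sum_nonneg fun t ht => add_nonneg (hg t ht _) (mul_nonneg hβ (le_max_right _ _))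

theorem three_le_of_isCompetitive_gChase {β : ℝ} (hβ : 0 < β) {c : ℝ}
    (hc : IsCompetitive β (gChase β) c) : 3 ≤ c := by
  obtain ⟨γ, hγ⟩ := hc
  by_contra! hlt
  obtain ⟨b, hb0, hcb, hb3⟩ : ∃ b : ℝ, 0 ≤ b ∧ c ≤ b ∧ b < 3 :=
    ⟨max c 0, le_max_right _ _, le_max_left _ _, max_lt hlt (by norm_num)⟩
  obtain ⟨ε, hε⟩ : ∃ ε : ℝ, ε = β * (3 - b) / 4 := ⟨_, rfl⟩
  have hpos : 0 < β * (3 - b) := mul_pos hβ (by linarith)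
  have hε0 : 0 < ε := by linarith
  have hεβ : ε < β := by nlinarith
  obtain ⟨n, hn⟩ := exists_nat_gt (γ / (β * (3 - b) / 2))
  rw [div_lt_iff₀ (by linarith)] at hn
  have hg : NonnegOn (4 * n) (cyclicInput β ε) :=
    fun t _ i => cyclicInput_nonneg hε0.le hεβ.le t i
  have h := hγ (4 * n) _ hg
  rw [(gChase_cyclicInput hε0 hεβ n).2.2] at h
  have h1 : opt (4 * n) β (cyclicInput β ε) ≤ n * β :=
    (opt_isLeast _ _ _).2 ⟨fun _ => 0, rfl, (cost_cyclicInput_zero β ε n).symm⟩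
  have h2 := mul_le_mul_of_nonneg_right hcb (opt_nonneg hβ.le hg)
  have h3 := mul_le_mul_of_nonneg_left h1 hb0
  have h4 : (n : ℝ) * (3 * β - 2 * ε) = b * (n * β) + n * (β * (3 - b) / 2) := by
    rw [hε]
    ring
  linarith

end EnergyPlan

theorem stmt2 (β : ℝ) (hβ : 0 < β) :
    EnergyPlan.IsOnline (EnergyPlan.gChase β) ∧
    (∀ (T : ℕ) (g : ℕ → Fin 2 → ℝ), EnergyPlan.NonnegOn T g →
      EnergyPlan.cost T β g (EnergyPlan.gChase β g) ≤ 3 * EnergyPlan.opt T β g) ∧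
    EnergyPlan.IsCompetitiveRatio β (EnergyPlan.gChase β) 3 := by
  refine ⟨EnergyPlan.isOnline_gChase β, EnergyPlan.cost_gChase_le hβ, ⟨0, fun T g hg => ?_⟩,
    fun c hc => EnergyPlan.three_le_of_isCompetitive_gChase hβ hc⟩
  rw [add_zero]
  exact EnergyPlan.cost_gChase_le hβ T g hg
end
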